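/- Let K be a field and 𝒜 = ⊕_{k≥0} 𝒜_k a commutative, associative, unital graded K-algebra generated by finitely many homogeneous elements ĝ₁, …, ĝ_m of positive degrees d₁, …, d_m; let R = K[g₁, …, g_m] be graded by deg g_i = d_i, with graded morphism x ↦ x̂ : R → 𝒜, g_i ↦ ĝ_i, and G_k = {g_i : d_i = k}. Fix a monomial order on R, i.e. a total order on the monomials of R such that m₁ < m₂ implies m₁·n < m₂·n for every monomial n; extend it to finite sets of monomials of equal cardinality by comparing their decreasing rearrangements lexicographically. Construct inductively: B₀ := {1}; A_k := {x·y : x ∈ B_l, y ∈ G_{k−l}, 0 ≤ l < k} \ {u·v : u ∈ A_m \ B_m, v ∈ G_{k−m}, 0 < m < k}; B_k = {x_{k,1}, …, x_{k,b_k}} ⊆ A_k a maximal subset whose image under x ↦ x̂ is linearly independent in 𝒜_k, chosen of maximal order among all such subsets; F_k := {x − Σ_{i=1}^{b_k} λ_{k,i}(x)·x_{k,i} : x ∈ A_k \ B_k}, where λ_{k,i}(x) ∈ K are the unique scalars with x̂ = Σ_{i=1}^{b_k} λ_{k,i}(x)·x̂_{k,i}. Then, with I ⊆ R the ideal generated by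 ⋃_{k≥1} F_k, the morphism x ↦ x̂ descends to an isomorphism of graded K-algebras R/I ≅ 𝒜, and {x̂ : x ∈ B_k} is a K-basis of 𝒜_k for each k. -/

import Mathlib

open MvPolynomial

/-- A polynomial is a (monic) monomial. -/
def IsMonicMonomial {K : Type*} [CommSemiring K] {m : ℕ}
    (p : MvPolynomial (Fin m) K) : Prop :=
  ∃ a : Fin m →₀ ℕ, p = monomial a 1

/-- Extension of a (monomial) order to finite sets of monomials of equal cardinality, by
comparing decreasing rearrangements lexicographically: `T ≤ S` holds iff `T = S` or the
largest element of the symmetric difference of `S` and `T` belongs to `S`. -/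
def SetLE {R : Type*} (lt : R → R → Prop) (T S : Set R) : Prop :=
  T = S ∨ ∃ x ∈ S, x ∉ T ∧
    ∀ y, ((y ∈ S ∧ y ∉ T) ∨ (y ∈ T ∧ y ∉ S)) → (y = x ∨ lt y x)

/-!
Maximality of the order of `B k` enters through a single exchange: if `x ∈ A' k` lies outside `B k`
and `b ∈ B k` occurs in the expansion of `φ x` over `φ '' B k`, then replacing `b` by `x` gives
another maximal independent subset of `A' k`, so `b` is larger than `x`. Hence every element of
`A' k \ B k` is, modulo the ideal `I` of relations, a combination of larger elements of `B k`.

A monomial of degree `k` outside `A' k` has the form `v * X i` with `v` outside `B`. By induction on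
the degree `v` is a combination of larger elements of `B` modulo `I`, and multiplication by `X i`
turns these into monomials of degree `k` larger than `v * X i`. The process stops since there is no
infinite ascending chain of monomials of a given degree. So `B k` spans the degree `k` part modulo
`I ≤ ker φ`, and as `φ` is graded and injective on the span of each `B k`, this forces `I = ker φ`.
-/

open Submodule

section Exchange

theorem mem_span_image_of_forall_mem_span_image_sdiff_singleton {ι R M : Type*} [Semiring R]
    [AddCommMonoid M] [Module R M] {v : ι → M} {s t : Set ι} {x : M} (hv : LinearIndepOn R v s)
    (hx : x ∈ span R (v '' s)) (hst : ∀ i ∈ s, i ∉ t → x ∈ span R (v '' (s \ {i}))) :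
    x ∈ span R (v '' t) := by
  obtain ⟨c, hcs, rfl⟩ := (Finsupp.mem_span_image_iff_linearCombination R).1 hx
  refine (Finsupp.mem_span_image_iff_linearCombination R).2 ⟨c, fun i hi => ?_, rfl⟩
  by_contra hit
  obtain ⟨c', hc', hcc'⟩ :=
    (Finsupp.mem_span_image_iff_linearCombination R).1 (hst i (hcs hi) hit)
  obtain rfl : c' = c :=
    linearIndepOn_iffₛ.1 hv c' (Finsupp.supported_mono Set.sdiff_subset hc') c hcs hcc'
  exact (hc' hi).2 rfl

theorem SetLE.lt_of_insert_sdiff_singleton {α : Type*} {lt : α → α → Prop} {B : Set α} {x b : α}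
    (h : SetLE lt (insert x (B \ {b})) B) (hxB : x ∉ B) : lt x b := by
  rcases h with h | ⟨w, hwB, hw, hmax⟩
  · exact absurd (h ▸ Set.mem_insert x _) hxB
  · obtain rfl : w = b := by
      by_contra hwb
      exact hw (Set.mem_insert_of_mem x ⟨hwB, hwb⟩)
    exact (hmax x (Or.inr ⟨Set.mem_insert x _, hxB⟩)).resolve_left fun h => hxB (h ▸ hwB)

theorem mem_span_image_of_forall_setLE {α K V : Type*} [DivisionRing K] [AddCommGroup V]
    [Module K V] {f : α → V} {lt : α → α → Prop} {S B : Set α} {x : α} (hBS : B ⊆ S)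
    (hli : LinearIndepOn K f B) (hspan : ∀ y ∈ S, f y ∈ span K (f '' B))
    (hmax : ∀ B' ⊆ S, LinearIndepOn K f B' → (∀ y ∈ S, f y ∈ span K (f '' B')) → SetLE lt B' B)
    (hx : x ∈ S) (hxB : x ∉ B) : f x ∈ span K (f '' {b ∈ B | lt x b}) := by
  refine mem_span_image_of_forall_mem_span_image_sdiff_singleton hli (hspan x hx)
    fun b hb hxb => ?_
  by_contra hxspan
  have hB : insert b (B \ {b}) = B := by
    rw [Set.insert_sdiff_singleton, Set.insert_eq_of_mem hb]
  have hb_mem : f b ∈ span K (f '' insert x (B \ {b})) := by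
    rw [Set.image_insert_eq]
    refine mem_span_insert_exchange ?_ hxspan
    rw [← Set.image_insert_eq, hB]
    exact hspan x hx
  have hspan_le : span K (f '' B) ≤ span K (f '' insert x (B \ {b})) := by
    rw [span_le]
    rintro _ ⟨c, hc, rfl⟩
    rcases eq_or_ne c b with rfl | hcb
    · exact hb_mem
    · exact subset_span (Set.mem_image_of_mem f (Set.mem_insert_of_mem x ⟨hc, hcb⟩))
  have hle : SetLE lt (insert x (B \ {b})) B :=
    hmax _ (Set.insert_subset hx (Set.sdiff_subset.trans hBS))
      ((hli.mono Set.sdiff_subset).insert hxspan) fun y hy => hspan_le (hspan y hy)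
  exact hxb ⟨hb, hle.lt_of_insert_sdiff_singleton hxB⟩

end Exchange

section Graded

open DirectSum

variable {ι K R A : Type*} [DecidableEq ι] [AddMonoid ι] [CommRing K] [Ring R] [Ring A]
  [Algebra K R] [Algebra K A] {ℛ : ι → Submodule K R} {𝒜 : ι → Submodule K A}
  [GradedAlgebra ℛ] [GradedAlgebra 𝒜] (f : ℛ →ₐᵍ[K] 𝒜)

theorem map_gradedComponent_eq_of_surjective (hf : Function.Surjective f) (k : ι) :
    (ℛ k).map f.toAlgHom.toLinearMap = 𝒜 k := by
  refine le_antisymm (map_le_iff_le_comap.2 fun x hx => f.map_mem hx) fun y hy => ?_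
  obtain ⟨x, rfl⟩ := hf y
  refine ⟨decompose ℛ x k, SetLike.coe_mem _, ?_⟩
  exact (map_directSumDecompose ℛ 𝒜 f).trans (decompose_of_mem_same 𝒜 hy)

variable {f} {I : Ideal R} {B : ι → Set R}

theorem ker_eq_of_gradedComponent_le_span_sup (hI : I ≤ RingHom.ker f)
    (hli : ∀ k, LinearIndepOn K f (B k))
    (hspan : ∀ k, ℛ k ≤ span K (B k) ⊔ I.restrictScalars K) : RingHom.ker f = I := by
  classical
  refine le_antisymm (fun x hx => ?_) hI
  rw [← sum_support_decompose ℛ x]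
  refine Ideal.sum_mem _ fun k _ => ?_
  have hdisj : Disjoint (span K (B k)) (LinearMap.ker f.toAlgHom.toLinearMap) := by
    have := Submodule.range_ker_disjoint (f := f.toAlgHom.toLinearMap) (hli k)
    rwa [Subtype.range_coe] at this
  have hle : I.restrictScalars K ≤ LinearMap.ker f.toAlgHom.toLinearMap := hI
  have hker : (decompose ℛ x k : R) ∈ LinearMap.ker f.toAlgHom.toLinearMap := by
    have : f x = 0 := hx
    refine (map_directSumDecompose ℛ 𝒜 f).trans ?_
    simp only [this, decompose_zero, DirectSum.zero_apply, ZeroMemClass.coe_zero]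
  have hmod := sup_inf_assoc_of_le (span K (B k)) hle
  rw [hdisj.eq_bot, sup_bot_eq, sup_comm] at hmod
  exact hmod.le ⟨hspan k (SetLike.coe_mem _), hker⟩

theorem span_image_eq_of_gradedComponent_le_span_sup (hf : Function.Surjective f)
    (hI : I ≤ RingHom.ker f) {k : ι} (hB : B k ⊆ ℛ k)
    (hspan : ℛ k ≤ span K (B k) ⊔ I.restrictScalars K) : span K (f '' B k) = 𝒜 k := by
  have hmap : (span K (B k)).map f.toAlgHom.toLinearMap = span K (f '' B k) := map_span _ _
  rw [← map_gradedComponent_eq_of_surjective f hf k]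
  refine le_antisymm (hmap ▸ map_mono (span_le.2 hB)) ((map_mono hspan).trans ?_)
  rw [Submodule.map_sup, hmap, sup_le_iff, map_le_iff_le_comap]
  refine ⟨le_rfl, fun x hx => ?_⟩
  have hx0 : f x = 0 := hI hx
  exact mem_comap.2 (hx0 ▸ zero_mem _)

end Graded

section MvPolynomial

variable {σ K : Type*}

section CommSemiring

variable [CommSemiring K] {d : σ → ℕ}

theorem weightedHomogeneousSubmodule_le_of_monomial_mem {k : ℕ}
    {N : Submodule K (MvPolynomial σ K)}
    (hN : ∀ a : σ →₀ ℕ, Finsupp.weight d a = k → monomial a 1 ∈ N) :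
    weightedHomogeneousSubmodule K d k ≤ N := by
  intro p hp
  induction hp using IsWeightedHomogeneous.induction_on with
  | zero => exact zero_mem N
  | add p q _ _ hp hq => exact add_mem hp hq
  | monomial a r ha =>
    have h := N.smul_mem r (hN a ha)
    rwa [smul_monomial, smul_eq_mul, mul_one] at h

theorem map_mem_of_forall_map_X_mem {A : Type*} [CommSemiring A] [Algebra K A]
    {𝒜 : ℕ → Submodule K A} [SetLike.GradedMonoid 𝒜] {φ : MvPolynomial σ K →ₐ[K] A}
    (hφ : ∀ i, φ (X i) ∈ 𝒜 (d i)) {k : ℕ} {p : MvPolynomial σ K}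
    (hp : p ∈ weightedHomogeneousSubmodule K d k) : φ p ∈ 𝒜 k := by
  suffices weightedHomogeneousSubmodule K d k ≤ (𝒜 k).comap φ.toLinearMap from this hp
  refine weightedHomogeneousSubmodule_le_of_monomial_mem ?_
  rintro a rfl
  change φ (monomial a 1) ∈ 𝒜 _
  rw [monomial_eq, C_1, one_mul, map_finsuppProd]
  simp only [map_pow]
  exact SetLike.prod_pow_mem_graded 𝒜 d _ a fun i _ => hφ i

theorem mem_span_sup_mono {R M : Type*} [Semiring R] [AddCommMonoid M] [Module R M] {S T : Set M}
    {N : Submodule R M} {x : M} (hST : S ⊆ T) (hx : x ∈ span R S ⊔ N) : x ∈ span R T ⊔ N :=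
  (sup_le_sup_right (span_mono hST) N : span R S ⊔ N ≤ span R T ⊔ N) hx

theorem mul_mem_of_mem_span_sup {R : Type*} [CommSemiring R] [Algebra K R] {S : Set R}
    {I : Ideal R} {N : Submodule K R} {x y : R} (hIN : I.restrictScalars K ≤ N)
    (hS : ∀ z ∈ S, z * y ∈ N) (hx : x ∈ span K S ⊔ I.restrictScalars K) : x * y ∈ N := by
  have hle : span K S ⊔ I.restrictScalars K ≤ N.comap (LinearMap.mulRight K y) :=
    sup_le (span_le.2 hS) fun _ hz => hIN (I.mul_mem_right y hz)
  exact hle hx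

/-- The combinatorial part of the inductive construction of candidate monomials `A' k` and basis
monomials `B k`: `B 0 = {1}`, and `A' k` consists of the multiples by one variable of basis
monomials that are not multiples by one variable of a rejected candidate of smaller positive
degree. How `B k` is selected from `A' k` is left open. -/
structure IsMonomialTower (d : σ → ℕ) (A' B : ℕ → Set (MvPolynomial σ K)) : Prop where
  zero_eq : B 0 = {1}
  candidates_eq : ∀ k, A' k =
    {z | ∃ (x : MvPolynomial σ K) (l : ℕ) (i : σ), x ∈ B l ∧ l + d i = k ∧ z = x * X i} \
    {z | ∃ (u : MvPolynomial σ K) (n : ℕ) (i : σ),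
      u ∈ A' n ∧ u ∉ B n ∧ 1 ≤ n ∧ n + d i = k ∧ z = u * X i}
  subset_candidates : ∀ k, 1 ≤ k → B k ⊆ A' k

namespace IsMonomialTower

variable {A' B : ℕ → Set (MvPolynomial σ K)}

theorem exists_eq_monomial_of_mem_candidates (hT : IsMonomialTower d A' B) (hd : ∀ i, 0 < d i)
    {k : ℕ} {x : MvPolynomial σ K} (hx : x ∈ A' k) :
    ∃ a : σ →₀ ℕ, Finsupp.weight d a = k ∧ x = monomial a 1 := by
  induction k using Nat.strong_induction_on generalizing x with
  | _ k ih =>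
    rw [hT.candidates_eq] at hx
    obtain ⟨⟨y, l, i, hy, rfl, rfl⟩, -⟩ := hx
    obtain ⟨a, rfl, rfl⟩ : ∃ a : σ →₀ ℕ, Finsupp.weight d a = l ∧ y = monomial a 1 := by
      rcases Nat.eq_zero_or_pos l with rfl | hl
      · rw [hT.zero_eq] at hy
        exact ⟨0, map_zero _, hy⟩
      · exact ih l (Nat.lt_add_of_pos_right (hd i)) (hT.subset_candidates l hl hy)
    refine ⟨a + Finsupp.single i 1, ?_, ?_⟩
    · rw [map_add, Finsupp.weight_single, one_smul]
    · rw [monomial_add_single, pow_one]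

theorem exists_eq_monomial (hT : IsMonomialTower d A' B) (hd : ∀ i, 0 < d i) {k : ℕ}
    {x : MvPolynomial σ K} (hx : x ∈ B k) :
    ∃ a : σ →₀ ℕ, Finsupp.weight d a = k ∧ x = monomial a 1 := by
  rcases Nat.eq_zero_or_pos k with rfl | hk
  · rw [hT.zero_eq] at hx
    exact ⟨0, map_zero _, hx⟩
  · exact hT.exists_eq_monomial_of_mem_candidates hd (hT.subset_candidates k hk hx)

theorem exists_factor_notMem [Nontrivial K] (hT : IsMonomialTower d A' B) (hd : ∀ i, 0 < d i)
    {a : σ →₀ ℕ} (ha : a ≠ 0) (haA : monomial a (1 : K) ∉ A' (Finsupp.weight d a)) :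
    ∃ (v : σ →₀ ℕ) (i : σ), a = v + Finsupp.single i 1 ∧
      monomial v (1 : K) ∉ B (Finsupp.weight d v) := by
  obtain ⟨i, hi⟩ := Finsupp.ne_iff.1 ha
  obtain ⟨v, rfl⟩ : ∃ v, a = v + Finsupp.single i 1 :=
    ⟨a - Finsupp.single i 1, (Finsupp.sub_add_single_one_cancel hi).symm⟩
  by_cases hvB : monomial v (1 : K) ∈ B (Finsupp.weight d v)
  · rw [hT.candidates_eq, Set.mem_sdiff, not_and, not_not] at haA
    obtain ⟨u, n, j, hu, huB, -, -, hvu⟩ := haA ⟨monomial v 1, _, i, hvB,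
      by rw [map_add, Finsupp.weight_single, one_smul], by rw [monomial_add_single, pow_one]⟩
    obtain ⟨w, rfl, rfl⟩ := hT.exists_eq_monomial_of_mem_candidates hd hu
    have hvw : monomial (v + Finsupp.single i 1) (1 : K) = monomial (w + Finsupp.single j 1) 1 := by
      rw [hvu, monomial_add_single, pow_one]
    exact ⟨w, j, monomial_left_injective one_ne_zero hvw, huB⟩
  · exact ⟨v, i, rfl, hvB⟩

variable [Nontrivial K] {lt : MvPolynomial σ K → MvPolynomial σ K → Prop}
  {I : Ideal (MvPolynomial σ K)}

theorem monomial_mem_span_gt_sup (hT : IsMonomialTower d A' B) (hd : ∀ i, 0 < d i)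
    (hlt_trans : ∀ a b c, lt a b → lt b c → lt a c)
    (hlt_mul : ∀ a b c : σ →₀ ℕ, lt (monomial a 1) (monomial b 1) →
      lt (monomial (a + c) 1) (monomial (b + c) 1))
    (hlt_wf : ∀ k, {a : σ →₀ ℕ | Finsupp.weight d a = k}.WellFoundedOn
      fun a b => lt (monomial b 1) (monomial a 1))
    (hI : ∀ k, 1 ≤ k → ∀ x ∈ A' k, x ∉ B k →
      x ∈ span K {z ∈ B k | lt x z} ⊔ I.restrictScalars K)
    {k : ℕ} {a : σ →₀ ℕ} (ha : Finsupp.weight d a = k) (haB : monomial a 1 ∉ B k) :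
    monomial a 1 ∈ span K {z ∈ B k | lt (monomial a 1) z} ⊔ I.restrictScalars K := by
  induction k using Nat.strong_induction_on generalizing a with
  | _ k ih_deg =>
  refine (hlt_wf k).induction (P := fun a => monomial a 1 ∉ B k →
    monomial a 1 ∈ span K {z ∈ B k | lt (monomial a 1) z} ⊔ I.restrictScalars K) ha ?_ haB
  clear! a
  rintro a rfl ih_gt haB
  have ha0 : a ≠ 0 := by
    rintro rfl
    exact haB (by rw [map_zero, hT.zero_eq]; rfl)
  by_cases haA : monomial a 1 ∈ A' (Finsupp.weight d a)
  · obtain ⟨i, hi⟩ := Finsupp.ne_iff.1 ha0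
    exact hI _ ((hd i).trans_le (Finsupp.le_weight_of_ne_zero' d hi)) _ haA haB
  obtain ⟨v, i, rfl, hvB⟩ := hT.exists_factor_notMem hd ha0 haA
  have hdeg : Finsupp.weight d (v + Finsupp.single i 1) = Finsupp.weight d v + d i := by
    rw [map_add, Finsupp.weight_single, one_smul]
  have hv := ih_deg _ (hdeg ▸ Nat.lt_add_of_pos_right (hd i)) rfl hvB
  rw [monomial_add_single, pow_one]
  refine mul_mem_of_mem_span_sup le_sup_right ?_ hv
  rintro z ⟨hzB, hvz⟩
  obtain ⟨b, hb, rfl⟩ := hT.exists_eq_monomial hd hzB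
  have hgt := hlt_mul v b (Finsupp.single i 1) hvz
  have hb_deg : Finsupp.weight d (b + Finsupp.single i 1) =
      Finsupp.weight d (v + Finsupp.single i 1) := by
    rw [map_add, map_add, hb]
  rw [← pow_one (X i), ← monomial_add_single, ← monomial_add_single]
  by_cases hbB : monomial (b + Finsupp.single i 1) 1 ∈ B (Finsupp.weight d (v + Finsupp.single i 1))
  · exact mem_sup_left (subset_span ⟨hbB, hgt⟩)
  · refine mem_span_sup_mono (fun z hz => ?_) (ih_gt _ hb_deg hgt hbB)
    exact ⟨hz.1, hlt_trans _ _ _ hgt hz.2⟩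

end IsMonomialTower

end CommSemiring

section Relations

variable {A : Type*} [CommRing K] [CommRing A] [Algebra K A] {φ : MvPolynomial σ K →ₐ[K] A}
  {A' B : ℕ → Set (MvPolynomial σ K)}

/-- The relations `F k` in degree `k`: the differences `x - y` where `x` is a rejected candidate and
`y` a linear combination of basis monomials with the same image under `φ`. -/
def relations (φ : MvPolynomial σ K →ₐ[K] A) (A' B : ℕ → Set (MvPolynomial σ K)) (k : ℕ) :
    Set (MvPolynomial σ K) :=
  {z | ∃ x ∈ A' k, x ∉ B k ∧ ∃ y ∈ span K (B k), φ x = φ y ∧ z = x - y}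

/-- The ideal of relations `I` of the presentation, generated by the relations `F k` of positive
degree. -/
noncomputable def relationIdeal (φ : MvPolynomial σ K →ₐ[K] A)
    (A' B : ℕ → Set (MvPolynomial σ K)) : Ideal (MvPolynomial σ K) :=
  Ideal.span {z | ∃ k, 1 ≤ k ∧ z ∈ relations φ A' B k}

theorem relationIdeal_le_ker : relationIdeal φ A' B ≤ RingHom.ker φ := by
  refine Ideal.span_le.2 ?_
  rintro _ ⟨k, -, x, -, -, y, -, hxy, rfl⟩
  rw [SetLike.mem_coe, RingHom.mem_ker, map_sub, hxy, sub_self]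

theorem mem_span_sup_relationIdeal {k : ℕ} (hk : 1 ≤ k) {x : MvPolynomial σ K} (hx : x ∈ A' k)
    (hxB : x ∉ B k) {T : Set (MvPolynomial σ K)} (hT : T ⊆ B k) (hxT : φ x ∈ span K (φ '' T)) :
    x ∈ span K T ⊔ (relationIdeal φ A' B).restrictScalars K := by
  obtain ⟨y, hy, hyx⟩ := (map_span φ.toLinearMap T).ge hxT
  have hrel : x - y ∈ relationIdeal φ A' B :=
    Ideal.subset_span ⟨k, hk, x, hx, hxB, y, span_mono hT hy, hyx.symm, rfl⟩
  exact mem_sup.2 ⟨y, hy, x - y, hrel, add_sub_cancel y x⟩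

end Relations

section Presentation

variable [Field K] {A : Type*} [CommRing A] [Algebra K A]
  {d : σ → ℕ} {φ : MvPolynomial σ K →ₐ[K] A}
  {lt : MvPolynomial σ K → MvPolynomial σ K → Prop} {A' B : ℕ → Set (MvPolynomial σ K)}

theorem weightedHomogeneousSubmodule_le_span_sup_relationIdeal (hT : IsMonomialTower d A' B)
    (hd : ∀ i, 0 < d i) (hlt_trans : ∀ a b c, lt a b → lt b c → lt a c)
    (hlt_mul : ∀ a b c : σ →₀ ℕ, lt (monomial a 1) (monomial b 1) →
      lt (monomial (a + c) 1) (monomial (b + c) 1))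
    (hlt_wf : ∀ k, {a : σ →₀ ℕ | Finsupp.weight d a = k}.WellFoundedOn
      fun a b => lt (monomial b 1) (monomial a 1))
    (hBli : ∀ k, LinearIndepOn K φ (B k))
    (hBspan : ∀ k, ∀ x ∈ A' k, φ x ∈ span K (φ '' B k))
    (hBmax : ∀ k, 1 ≤ k → ∀ B' ⊆ A' k, LinearIndepOn K φ B' →
      (∀ x ∈ A' k, φ x ∈ span K (φ '' B')) → SetLE lt B' (B k)) (k : ℕ) :
    weightedHomogeneousSubmodule K d k ≤
      span K (B k) ⊔ (relationIdeal φ A' B).restrictScalars K := by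
  have hreduce : ∀ n, 1 ≤ n → ∀ x ∈ A' n, x ∉ B n →
      x ∈ span K {z ∈ B n | lt x z} ⊔ (relationIdeal φ A' B).restrictScalars K :=
    fun n hn x hx hxB => mem_span_sup_relationIdeal hn hx hxB (Set.sep_subset _ _) <|
      mem_span_image_of_forall_setLE (hT.subset_candidates n hn) (hBli n) (hBspan n) (hBmax n hn)
        hx hxB
  refine weightedHomogeneousSubmodule_le_of_monomial_mem fun a ha => ?_
  by_cases haB : monomial a 1 ∈ B k
  · exact mem_sup_left (subset_span haB)
  · exact mem_span_sup_mono (Set.sep_subset _ _)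
      (hT.monomial_mem_span_gt_sup hd hlt_trans hlt_mul hlt_wf hreduce ha haB)

end Presentation

end MvPolynomial

theorem graded_algebra_presentation_with_monomial_order_general
    {K : Type*} [Field K] {A : Type*} [CommRing A] [Algebra K A]
    (𝒜 : ℕ → Submodule K A) [GradedAlgebra 𝒜] {σ : Type*} {d : σ → ℕ} (hd : ∀ i, 0 < d i)
    {g : σ → A} (hg_mem : ∀ i, g i ∈ 𝒜 (d i)) (hg_gen : Algebra.adjoin K (Set.range g) = ⊤)
    {φ : MvPolynomial σ K →ₐ[K] A} (hφ : ∀ i, φ (X i) = g i)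
    {lt : MvPolynomial σ K → MvPolynomial σ K → Prop}
    (hlt_trans : ∀ a b c, lt a b → lt b c → lt a c)
    (hlt_mul : ∀ a b c : σ →₀ ℕ, lt (monomial a 1) (monomial b 1) →
      lt (monomial (a + c) 1) (monomial (b + c) 1))
    (hlt_wf : ∀ k, {a : σ →₀ ℕ | Finsupp.weight d a = k}.WellFoundedOn
      fun a b => lt (monomial b 1) (monomial a 1))
    {A' B : ℕ → Set (MvPolynomial σ K)} (hT : IsMonomialTower d A' B)
    (hBli : ∀ k, LinearIndepOn K φ (B k))
    (hBspan : ∀ k, ∀ x ∈ A' k, φ x ∈ span K (φ '' B k))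
    (hBmax : ∀ k, 1 ≤ k → ∀ B' ⊆ A' k, LinearIndepOn K φ B' →
      (∀ x ∈ A' k, φ x ∈ span K (φ '' B')) → SetLE lt B' (B k)) :
    RingHom.ker φ.toRingHom = relationIdeal φ A' B ∧
    Function.Surjective φ ∧
    (∀ k, ∀ p ∈ weightedHomogeneousSubmodule K d k, φ p ∈ 𝒜 k) ∧
    (∀ k, span K (φ '' B k) = 𝒜 k ∧ LinearIndepOn K φ (B k)) := by
  have hgraded : ∀ k, ∀ p ∈ weightedHomogeneousSubmodule K d k, φ p ∈ 𝒜 k :=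
    fun k p hp => map_mem_of_forall_map_X_mem (fun i => hφ i ▸ hg_mem i) hp
  have hsurj : Function.Surjective φ := by
    rw [← AlgHom.range_eq_top, eq_top_iff, ← hg_gen, Algebra.adjoin_le_iff]
    rintro _ ⟨i, rfl⟩
    exact ⟨X i, hφ i⟩
  let := weightedGradedAlgebra K d
  let f : weightedHomogeneousSubmodule K d →ₐᵍ[K] 𝒜 := { φ with map_mem := hgraded _ _ }
  have hspan := weightedHomogeneousSubmodule_le_span_sup_relationIdeal hT hd hlt_trans hlt_mul
    hlt_wf hBli hBspan hBmax
  have hB_homogeneous : ∀ k, B k ⊆ weightedHomogeneousSubmodule K d k := by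
    intro k x hx
    obtain ⟨a, ha, rfl⟩ := hT.exists_eq_monomial hd hx
    exact isWeightedHomogeneous_monomial d a 1 ha
  exact ⟨ker_eq_of_gradedComponent_le_span_sup (f := f) relationIdeal_le_ker hBli hspan, hsurj,
    hgraded, fun k => ⟨span_image_eq_of_gradedComponent_le_span_sup (f := f) hsurj
      relationIdeal_le_ker (hB_homogeneous k) (hspan k), hBli k⟩⟩

theorem wellFoundedOn_weight_eq {σ α : Type*} [Finite σ] {d : σ → ℕ} (hd : ∀ i, 0 < d i)
    {lt : α → α → Prop} (hlt_trans : ∀ a b c, lt a b → lt b c → lt a c)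
    (hlt_irrefl : ∀ a, ¬ lt a a) (e : (σ →₀ ℕ) → α) (k : ℕ) :
    {a : σ →₀ ℕ | Finsupp.weight d a = k}.WellFoundedOn fun a b => lt (e b) (e a) :=
  have : IsStrictOrder (σ →₀ ℕ) fun a b => lt (e b) (e a) :=
    { irrefl := fun a => hlt_irrefl (e a)
      trans := fun _ _ _ hab hbc => hlt_trans _ _ _ hbc hab }
  (Finsupp.finite_of_nat_weight_eq d (fun i => (hd i).ne') k).wellFoundedOn

/-- **Corollary 2.6.** The conclusion of Lemma 2.5 (see Statement 16) still
holds when `A_k` is replaced by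
`{x·y : x ∈ B_l, y ∈ G_{k−l}} \ {u·v : u ∈ A_m \ B_m, v ∈ G_{k−m}, 0 < m < k}` and `B_k`
is chosen of maximal order (with respect to a fixed monomial order, extended to sets of
monomials) among the maximal subsets of `A_k` with linearly independent image. -/
theorem graded_algebra_presentation_with_monomial_order
    (K : Type*) [Field K] (A : Type*) [CommRing A] [Algebra K A]
    (𝒜 : ℕ → Submodule K A) [GradedAlgebra 𝒜]
    (m : ℕ) (d : Fin m → ℕ) (hd : ∀ i, 0 < d i)
    (g : Fin m → A) (hgmem : ∀ i, g i ∈ 𝒜 (d i))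
    (hgen : Algebra.adjoin K (Set.range g) = ⊤)
    (φ : MvPolynomial (Fin m) K →ₐ[K] A) (hφ : ∀ i, φ (X i) = g i)
    -- a monomial order:
    (lt : MvPolynomial (Fin m) K → MvPolynomial (Fin m) K → Prop)
    (hlt_trans : ∀ a b c, lt a b → lt b c → lt a c)
    (hlt_irrefl : ∀ a, ¬ lt a a)
    (hlt_total : ∀ a b : Fin m →₀ ℕ,
      a = b ∨ lt (monomial a (1 : K)) (monomial b 1) ∨ lt (monomial b 1) (monomial a 1))
    (hlt_mul : ∀ a b c : Fin m →₀ ℕ, lt (monomial a (1 : K)) (monomial b 1) →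
      lt (monomial (a + c) 1) (monomial (b + c) 1))
    (A' B F : ℕ → Set (MvPolynomial (Fin m) K))
    (hB0 : B 0 = {1})
    (hA' : ∀ k, A' k =
      {z | ∃ (x : MvPolynomial (Fin m) K) (l : ℕ) (i : Fin m),
        x ∈ B l ∧ l + d i = k ∧ z = x * X i} \
      {z | ∃ (u : MvPolynomial (Fin m) K) (n : ℕ) (i : Fin m),
        u ∈ A' n ∧ u ∉ B n ∧ 1 ≤ n ∧ n + d i = k ∧ z = u * X i})
    (hBsub : ∀ k, 1 ≤ k → B k ⊆ A' k)
    (hBli : ∀ k, LinearIndependent K (fun x : B k => φ (x : MvPolynomial (Fin m) K)))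
    (hBmax : ∀ k, ∀ x ∈ A' k, φ x ∈ Submodule.span K (φ '' B k))
    -- `B k` has maximal order among all maximal independent subsets of `A' k`:
    (hBord : ∀ k, 1 ≤ k → ∀ B' : Set (MvPolynomial (Fin m) K), B' ⊆ A' k →
      LinearIndependent K (fun x : B' => φ (x : MvPolynomial (Fin m) K)) →
      (∀ x ∈ A' k, φ x ∈ Submodule.span K (φ '' B')) →
      SetLE lt B' (B k))
    (hF : ∀ k, F k = {z | ∃ x ∈ A' k, x ∉ B k ∧ ∃ y ∈ Submodule.span K (B k),
      φ x = φ y ∧ z = x - y})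
    (I : Ideal (MvPolynomial (Fin m) K))
    (hI : I = Ideal.span {z | ∃ k, 1 ≤ k ∧ z ∈ F k}) :
    RingHom.ker φ.toRingHom = I ∧
    Function.Surjective φ ∧
    (∀ k, ∀ p ∈ weightedHomogeneousSubmodule K d k, φ p ∈ 𝒜 k) ∧
    (∀ k, Submodule.span K (φ '' B k) = 𝒜 k ∧
      LinearIndependent K (fun x : B k => φ (x : MvPolynomial (Fin m) K))) := by
  obtain rfl : F = relations φ A' B := funext hF
  exact hI ▸ graded_algebra_presentation_with_monomial_order_general 𝒜 hd hgmem hgen hφ hlt_trans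
    hlt_mul (wellFoundedOn_weight_eq hd hlt_trans hlt_irrefl _) ⟨hB0, hA', hBsub⟩ hBli hBmax hBord
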